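/- For each n∈ℕ let G_n=(V_n,E_n,w_n) be an undirected d_n-regular tree with hierarchical edge weights (edges in the same generation have equal weight and weights are non-decreasing in the generation). For each n let x_n,y_n∈V_n be vertices such that x_n is the parent of y_n and such that the minimal distance between y_n and a leaf of G_n is a constant k, independent of n; let e_n denote the edge between x_n and y_n, and let q_n>0 be the intensity parameter. Then as n→∞, U_{q_n}^{(G_n)}(x_n,y_n) converges to 0 if q_n = o( d_n^{−k}·w_n(e_n) ), and converges to 1 if q_n = ω( d_n^{−k}·w_n(e_n) ). -/

import Mathlib

open Classical Finset Filter

noncomputable section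

variable {V : Type*} [Fintype V] [DecidableEq V]

/-- One step of following the parent map of a rooted forest. -/
def fstep (f : V → Option V) : Option V → Option V := fun o => o.bind f

/-- `f : V → Option V` encodes a spanning rooted forest structure: every vertex either is a
root (`f x = none`) or points to its parent, and iterating the parent map from any vertex
eventually reaches a root (i.e. there are no cycles). -/
def IsForest (f : V → Option V) : Prop :=
  ∀ x : V, ∃ n : ℕ, (fstep f)^[n] (some x) = none

/-- `f` is a spanning rooted forest of the directed graph with edge relation `E`:
all its (parent-pointing) edges are edges of the graph. -/
def IsRForest (E : V → V → Prop) (f : V → Option V) : Prop :=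
  IsForest f ∧ ∀ x y : V, f x = some y → E x y

/-- The number of roots (equivalently, of trees) of a rooted forest. -/
def nRoots (f : V → Option V) : ℕ := (univ.filter fun x : V => f x = none).card

/-- The weight `w(F) = ∏_{e ∈ F} w(e)` of a rooted forest. -/
def fWeight (w : V → V → ℝ) (f : V → Option V) : ℝ :=
  ∏ x : V, (f x).elim 1 (fun y => w x y)

/-- Non-normalised forest measure of a set `H` of forests: `∑_{F ∈ H} q^{r(F)} w(F)`,
the sum running over spanning rooted forests of the graph belonging to `H`. -/
def fMeasure (E : V → V → Prop) (w : V → V → ℝ) (q : ℝ) (H : Set (V → Option V)) : ℝ :=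
  ∑ f ∈ univ.filter (fun f : V → Option V => IsRForest E f ∧ f ∈ H),
    q ^ nRoots f * fWeight w f

/-- Partition function `Z(q) = ∑_F q^{r(F)} w(F)`. -/
def Zf (E : V → V → Prop) (w : V → V → ℝ) (q : ℝ) : ℝ := fMeasure E w q Set.univ

/-- Probability `P(Φ_q ∈ H)` for the random spanning rooted forest `Φ_q`. -/
def fProb (E : V → V → Prop) (w : V → V → ℝ) (q : ℝ) (H : Set (V → Option V)) : ℝ :=
  fMeasure E w q H / Zf E w q

/-- Ancestor relation in the forest `f`. -/
def anc (f : V → Option V) : V → V → Prop :=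
  Relation.ReflTransGen (fun a b => f a = some b)

/-- `x` and `y` belong to the same tree of the forest `f` (they have a common ancestor). -/
def SameTree (f : V → Option V) (x y : V) : Prop := ∃ z, anc f x z ∧ anc f y z

/-- Two-point correlation `U_q(x,y)`: the probability that `x` and `y` lie in
different trees of `Φ_q`. -/
def Ucorr (E : V → V → Prop) (w : V → V → ℝ) (q : ℝ) (x y : V) : ℝ :=
  fProb E w q {f | ¬ SameTree f x y}

end

section RootedForests

variable {V : Type*} [Fintype V] [DecidableEq V]

omit [Fintype V] [DecidableEq V] in
theorem isForest_iff_exists_root (f : V → Option V) :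
    IsForest f ↔ ∀ x, ∃ z, anc f x z ∧ f z = none := by
  constructor
  · intro h x
    obtain ⟨n, hn⟩ := h x
    induction n generalizing x with
    | zero => simp at hn
    | succ n ih =>
      rw [Function.iterate_succ_apply] at hn
      cases hx : f x with
      | none => exact ⟨x, Relation.ReflTransGen.refl, hx⟩
      | some y =>
        have hstep : fstep f (some x) = some y := hx
        rw [hstep] at hn
        obtain ⟨z, hyz, hz⟩ := ih y hn
        exact ⟨z, Relation.ReflTransGen.head hx hyz, hz⟩
  · intro h x
    obtain ⟨z, hxz, hz⟩ := h x
    induction hxz using Relation.ReflTransGen.head_induction_on with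
    | refl => exact ⟨1, hz⟩
    | head hab _ ih =>
      obtain ⟨n, hn⟩ := ih
      refine ⟨n + 1, ?_⟩
      rw [Function.iterate_succ_apply]
      have hstep : fstep f (some _) = some _ := hab
      rwa [hstep]

omit [Fintype V] [DecidableEq V] in
theorem IsForest.not_transGen_self {f : V → Option V} (hf : IsForest f) (x : V) :
    ¬ Relation.TransGen (fun a b => f a = some b) x x := by
  obtain ⟨z, hxz, hz⟩ := (isForest_iff_exists_root f).1 hf x
  induction hxz using Relation.ReflTransGen.head_induction_on with
  | refl =>
    intro h
    obtain ⟨b, hb, -⟩ := Relation.TransGen.head'_iff.1 h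
    simp [hz] at hb
  | head hab _ ih =>
    intro h
    obtain ⟨b, hb, hbx⟩ := Relation.TransGen.head'_iff.1 h
    obtain rfl : _ = b := Option.some_injective _ (hab.symm.trans hb)
    exact ih (Relation.TransGen.tail' hbx hab)

omit [Fintype V] in
theorem IsForest.update_some {f : V → Option V} (hf : IsForest f) {y c : V} (hy : f y = none)
    (hc : ¬ anc f c y) : IsForest (Function.update f y (some c)) := by
  rw [isForest_iff_exists_root] at hf ⊢
  have hmono : ∀ {u v}, anc f u v → anc (Function.update f y (some c)) u v := by
    intro u v h
    refine Relation.ReflTransGen.mono (fun a b hab => ?_) _ _ h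
    have : a ≠ y := by rintro rfl; simp [hy] at hab
    simpa [Function.update_of_ne this] using hab
  intro x
  obtain ⟨z, hxz, hz⟩ := hf x
  by_cases hzy : z = y
  · subst hzy
    obtain ⟨z', hcz, hz'⟩ := hf c
    have hne : z' ≠ z := by rintro rfl; exact hc hcz
    refine ⟨z', (hmono hxz).trans (Relation.ReflTransGen.head ?_ (hmono hcz)), ?_⟩
    · simp
    · simpa [Function.update_of_ne hne] using hz'
  · exact ⟨z, hmono hxz, by simpa [Function.update_of_ne hzy] using hz⟩

omit [Fintype V] in
theorem IsForest.update_none {f : V → Option V} (hf : IsForest f) (y : V) :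
    IsForest (Function.update f y none) := by
  rw [isForest_iff_exists_root] at hf ⊢
  intro x
  obtain ⟨z, hxz, hz⟩ := hf x
  induction hxz using Relation.ReflTransGen.head_induction_on with
  | refl =>
    refine ⟨z, Relation.ReflTransGen.refl, ?_⟩
    by_cases h : z = y
    · simp [h]
    · simpa [Function.update_of_ne h] using hz
  | @head a b hab _ ih =>
    by_cases h : a = y
    · exact ⟨a, Relation.ReflTransGen.refl, by simp [h]⟩
    · obtain ⟨z', hz', hn⟩ := ih
      exact ⟨z', Relation.ReflTransGen.head (by simpa [Function.update_of_ne h] using hab) hz', hn⟩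

omit [DecidableEq V] in
theorem pow_nRoots_mul_fWeight (w : V → V → ℝ) (q : ℝ) (f : V → Option V) :
    q ^ nRoots f * fWeight w f = ∏ x, (f x).elim q (w x) := by
  have h : q ^ nRoots f = ∏ x, if f x = none then q else 1 := by
    rw [Finset.prod_ite]; simp [nRoots]
  rw [h, fWeight, ← Finset.prod_mul_distrib]
  refine Finset.prod_congr rfl fun x _ => ?_
  cases f x <;> simp

theorem pow_nRoots_mul_fWeight_update (w : V → V → ℝ) {q : ℝ} (hq : 0 < q) (f : V → Option V)
    {y : V} (c : V) (hy : f y = none) :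
    q ^ nRoots (Function.update f y (some c)) * fWeight w (Function.update f y (some c)) =
      w y c / q * (q ^ nRoots f * fWeight w f) := by
  rw [pow_nRoots_mul_fWeight, pow_nRoots_mul_fWeight,
    ← Finset.mul_prod_erase univ _ (Finset.mem_univ y),
    ← Finset.mul_prod_erase univ (fun x => (f x).elim q (w x)) (Finset.mem_univ y)]
  have : ∏ x ∈ univ.erase y, (Function.update f y (some c) x).elim q (w x) =
      ∏ x ∈ univ.erase y, (f x).elim q (w x) := by
    refine Finset.prod_congr rfl fun x hx => ?_
    rw [Function.update_of_ne (Finset.ne_of_mem_erase hx)]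
  rw [this]
  simp only [Function.update_self, Option.elim_some, hy, Option.elim_none]
  field_simp

section Measure

variable {E : V → V → Prop} {w : V → V → ℝ} {q : ℝ}

theorem fMeasure_congr {S T : Set (V → Option V)} (h : ∀ f, IsRForest E f → (f ∈ S ↔ f ∈ T)) :
    fMeasure E w q S = fMeasure E w q T := by
  unfold fMeasure
  refine Finset.sum_congr (Finset.filter_congr fun f _ => ?_) fun _ _ => rfl
  constructor
  · exact fun hf => ⟨hf.1, (h f hf.1).1 hf.2⟩
  · exact fun hf => ⟨hf.1, (h f hf.1).2 hf.2⟩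

omit [DecidableEq V] in
theorem IsRForest.weight_nonneg (hw : ∀ u v, E u v → 0 ≤ w u v) (hq : 0 < q)
    {f : V → Option V} (hf : IsRForest E f) : 0 ≤ q ^ nRoots f * fWeight w f := by
  rw [pow_nRoots_mul_fWeight]
  refine Finset.prod_nonneg fun x _ => ?_
  cases h : f x with
  | none => exact hq.le
  | some y => exact hw x y (hf.2 x y h)

theorem fMeasure_nonneg (hw : ∀ u v, E u v → 0 ≤ w u v) (hq : 0 < q) (S : Set (V → Option V)) :
    0 ≤ fMeasure E w q S :=
  Finset.sum_nonneg fun _ hf => (Finset.mem_filter.1 hf).2.1.weight_nonneg hw hq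

theorem fMeasure_mono (hw : ∀ u v, E u v → 0 ≤ w u v) (hq : 0 < q) {S T : Set (V → Option V)}
    (h : ∀ f, IsRForest E f → f ∈ S → f ∈ T) : fMeasure E w q S ≤ fMeasure E w q T := by
  refine Finset.sum_le_sum_of_subset_of_nonneg ?_ fun f hf _ =>
    (Finset.mem_filter.1 hf).2.1.weight_nonneg hw hq
  intro f hf
  simp only [Finset.mem_filter, Finset.mem_univ, true_and] at hf ⊢
  exact ⟨hf.1, h f hf.1 hf.2⟩

theorem fMeasure_split (S : Set (V → Option V)) (P : (V → Option V) → Prop) :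
    fMeasure E w q S = fMeasure E w q {f | P f ∧ f ∈ S} + fMeasure E w q {f | ¬ P f ∧ f ∈ S} := by
  unfold fMeasure
  rw [← Finset.sum_filter_add_sum_filter_not _ P, Finset.filter_filter, Finset.filter_filter]
  congr 1 <;>
  · refine Finset.sum_congr ?_ fun _ _ => rfl
    ext f
    simp only [Finset.mem_filter, Set.mem_ofPred_eq]
    tauto

theorem fMeasure_exists_eq_sum (S : Set (V → Option V)) (v : V) (C : Finset V) :
    fMeasure E w q {f | (∃ c ∈ C, f v = some c) ∧ f ∈ S} =
      ∑ c ∈ C, fMeasure E w q {f | f v = some c ∧ f ∈ S} := by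
  induction C using Finset.induction_on with
  | empty => simp [fMeasure]
  | insert c C hc ih =>
    rw [Finset.sum_insert hc, ← ih, fMeasure_split _ (fun f => f v = some c)]
    congr 1
    · refine fMeasure_congr fun f _ => ?_
      simp only [Set.mem_ofPred_eq, Finset.mem_insert]
      constructor
      · tauto
      · exact fun h => ⟨h.1, ⟨c, Or.inl rfl, h.1⟩, h.2⟩
    · refine fMeasure_congr fun f _ => ?_
      simp only [Set.mem_ofPred_eq, Finset.mem_insert]
      constructor
      · rintro ⟨h, ⟨c', rfl | h1, h2⟩, h3⟩
        · exact absurd h2 h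
        · exact ⟨⟨c', h1, h2⟩, h3⟩
      · rintro ⟨⟨c', h1, h2⟩, h3⟩
        refine ⟨fun h => hc ?_, ⟨c', Or.inr h1, h2⟩, h3⟩
        rwa [Option.some_injective _ (h.symm.trans h2)]

theorem fMeasure_pos (hw : ∀ u v, E u v → 0 ≤ w u v) (hq : 0 < q) {S : Set (V → Option V)}
    (hS : (fun _ => none) ∈ S) : 0 < fMeasure E w q S := by
  refine Finset.sum_pos' (fun f hf => (Finset.mem_filter.1 hf).2.1.weight_nonneg hw hq)
    ⟨fun _ => none, ?_, ?_⟩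
  · simp only [Finset.mem_filter, Finset.mem_univ, true_and]
    exact ⟨⟨fun x => ⟨1, rfl⟩, fun x y h => by simp at h⟩, hS⟩
  · rw [pow_nRoots_mul_fWeight]
    exact Finset.prod_pos fun _ _ => hq

end Measure

/-- `OffInvariant T S`: membership in `S` only depends on the values outside `T`. -/
def OffInvariant (T : Set V) (S : Set (V → Option V)) : Prop :=
  ∀ f g : V → Option V, (∀ u, u ∉ T → f u = g u) → f ∈ S → g ∈ S

omit [Fintype V] in
theorem OffInvariant.update_mem_iff {T : Set V} {S : Set (V → Option V)} (h : OffInvariant T S)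
    {v : V} (hv : v ∈ T) (f : V → Option V) (o : Option V) :
    Function.update f v o ∈ S ↔ f ∈ S := by
  have hne : ∀ u, u ∉ T → u ≠ v := fun u hu e => hu (e.symm ▸ hv)
  constructor <;> refine h _ _ fun u hu => ?_
  · exact Function.update_of_ne (hne u hu) _ _
  · exact (Function.update_of_ne (hne u hu) _ _).symm

section Acyclic

variable {G : SimpleGraph V} {w : V → V → ℝ} {q : ℝ}

omit [Fintype V] [DecidableEq V] in
theorem SimpleGraph.IsAcyclic.eq_some_of_sameTree (hG : G.IsAcyclic) {f : V → Option V}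
    (hf : ∀ x y : V, f x = some y → G.Adj x y) {x y : V} (hxy : G.Adj x y)
    (h : SameTree f x y) : f x = some y ∨ f y = some x := by
  by_contra! hne
  refine SimpleGraph.isBridge_iff.1 (SimpleGraph.isAcyclic_iff_forall_adj_isBridge.1 hG hxy) ?_
  have key : ∀ {u v}, anc f u v → (G.deleteEdges {s(x, y)}).Reachable u v := by
    intro u v huv
    induction huv with
    | refl => exact SimpleGraph.Reachable.refl _
    | @tail b c _ hbc ih =>
      refine ih.trans (SimpleGraph.Adj.reachable ?_)
      rw [SimpleGraph.deleteEdges_adj]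
      refine ⟨hf _ _ hbc, ?_⟩
      simp only [Set.mem_singleton_iff, Sym2.eq_iff]
      rintro (⟨rfl, rfl⟩ | ⟨rfl, rfl⟩)
      · exact hne.1 hbc
      · exact hne.2 hbc
  obtain ⟨z, hx, hy⟩ := h
  exact (key hx).trans (key hy).symm

theorem fMeasure_edge (hG : G.IsAcyclic) (hq : 0 < q) {y c : V} (hyc : G.Adj y c)
    (S : Set (V → Option V)) :
    fMeasure G.Adj w q {f | f y = some c ∧ f ∈ S} = w y c / q *
      fMeasure G.Adj w q {f | f c ≠ some y ∧ f y = none ∧ Function.update f y (some c) ∈ S} := by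
  unfold fMeasure
  rw [Finset.mul_sum]
  symm
  refine Finset.sum_nbij' (fun f => Function.update f y (some c))
    (fun f => Function.update f y none) ?_ ?_ ?_ ?_ ?_
  · intro f hf
    simp only [Finset.mem_filter, Finset.mem_univ, true_and, Set.mem_ofPred_eq,
      Function.update_self] at hf ⊢
    obtain ⟨⟨hf, hadj⟩, hcy, hy, hS⟩ := hf
    refine ⟨⟨hf.update_some hy fun h => ?_, fun u v huv => ?_⟩, hS⟩
    · rcases hG.eq_some_of_sameTree hadj hyc.symm ⟨y, h, Relation.ReflTransGen.refl⟩ with h | h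
      · exact hcy h
      · simp [hy] at h
    · by_cases hu : u = y
      · subst hu
        rw [Function.update_self] at huv
        exact Option.some_injective _ huv ▸ hyc
      · rw [Function.update_of_ne hu] at huv
        exact hadj u v huv
  · intro f hf
    simp only [Finset.mem_filter, Finset.mem_univ, true_and, Set.mem_ofPred_eq,
      Function.update_self, Function.update_idem] at hf ⊢
    obtain ⟨⟨hf, hadj⟩, hy, hS⟩ := hf
    refine ⟨⟨hf.update_none y, fun u v huv => ?_⟩, ?_, ?_⟩
    · by_cases hu : u = y
      · simp [hu] at huv
      · rw [Function.update_of_ne hu] at huv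
        exact hadj u v huv
    · rw [Function.update_of_ne hyc.ne']
      intro hc
      exact hf.not_transGen_self y (Relation.TransGen.head hy (Relation.TransGen.single hc))
    · rwa [← hy, Function.update_eq_self]
  · intro f hf
    simp only [Finset.mem_filter, Set.mem_ofPred_eq] at hf
    rw [Function.update_idem, ← hf.2.2.2.1, Function.update_eq_self]
  · intro f hf
    simp only [Finset.mem_filter, Set.mem_ofPred_eq] at hf
    rw [Function.update_idem, ← hf.2.2.1, Function.update_eq_self]
  · intro f hf
    simp only [Finset.mem_filter, Set.mem_ofPred_eq] at hf
    exact (pow_nRoots_mul_fWeight_update w hq f c hf.2.2.2.1).symm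

theorem fMeasure_edge_of_offInvariant (hG : G.IsAcyclic) (hq : 0 < q) {v c : V}
    (hvc : G.Adj v c) {T : Set V} {S : Set (V → Option V)} (hS : OffInvariant T S) (hv : v ∈ T) :
    fMeasure G.Adj w q {f | f v = some c ∧ f ∈ S} =
      w v c / q * fMeasure G.Adj w q {f | f c ≠ some v ∧ f v = none ∧ f ∈ S} := by
  rw [fMeasure_edge hG hq hvc]
  simp only [hS.update_mem_iff hv]

theorem fMeasure_root_split (hG : G.IsAcyclic) (hq : 0 < q) (hsymm : ∀ u v, w u v = w v u)
    {v c : V} (hvc : G.Adj v c) {T : Set V} {S : Set (V → Option V)} (hS : OffInvariant T S)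
    (hc : c ∈ T) :
    fMeasure G.Adj w q {f | f v = none ∧ f ∈ S} =
      w v c / q * fMeasure G.Adj w q {f | f c = none ∧ f v = none ∧ f ∈ S} +
      fMeasure G.Adj w q {f | f c ≠ some v ∧ f v = none ∧ f ∈ S} := by
  rw [fMeasure_split _ (fun f => f c = some v)]
  congr 1
  rw [fMeasure_edge hG hq hvc.symm, hsymm v c]
  congr 1
  refine fMeasure_congr fun f _ => ?_
  simp only [Set.mem_ofPred_eq, Function.update_of_ne hvc.ne, hS.update_mem_iff hc]
  constructor
  · tauto
  · exact fun h => ⟨by simp [h.2.1], h.1, h.2⟩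

theorem card_mul_root_le (hG : G.IsAcyclic) (hq : 0 < q) (hsymm : ∀ u v, w u v = w v u)
    (hw : ∀ u v, G.Adj u v → 0 ≤ w u v) {τ α : ℝ} {v : V} {C : Finset V}
    {T : Set V} {S : Set (V → Option V)} (hS : OffInvariant T S) (hv : v ∈ T)
    (hCadj : ∀ c ∈ C, G.Adj v c) (hCT : ∀ c ∈ C, c ∈ T) (hτ : ∀ c ∈ C, τ ≤ w v c / q)
    (hC : ∀ c ∈ C, τ * fMeasure G.Adj w q {f | f c = none ∧ f v = none ∧ f ∈ S} ≤
      α * fMeasure G.Adj w q {f | f c ≠ some v ∧ f v = none ∧ f ∈ S}) :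
    (C.card : ℝ) * (τ * fMeasure G.Adj w q {f | f v = none ∧ f ∈ S}) ≤
      (1 + α) * fMeasure G.Adj w q {f | (∃ c ∈ C, f v = some c) ∧ f ∈ S} := by
  rw [fMeasure_exists_eq_sum, Finset.mul_sum, ← nsmul_eq_mul]
  refine Finset.card_nsmul_le_sum _ _ _ fun c hc => ?_
  rw [fMeasure_edge_of_offInvariant hG hq (hCadj c hc) hS hv,
    fMeasure_root_split hG hq hsymm (hCadj c hc) hS (hCT c hc)]
  have h1 := mul_le_mul_of_nonneg_left (hC c hc) (div_nonneg (hw v c (hCadj c hc)) hq.le)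
  have h2 := mul_le_mul_of_nonneg_right (hτ c hc)
    (fMeasure_nonneg (E := G.Adj) hw hq {f | f c ≠ some v ∧ f v = none ∧ f ∈ S})
  linarith

theorem fMeasure_le_mul_root (hG : G.IsAcyclic) (hq : 0 < q) (hsymm : ∀ u v, w u v = w v u)
    (hw : ∀ u v, G.Adj u v → 0 ≤ w u v) {β : ℝ} {v : V} {C : Finset V}
    {T : Set V} {S : Set (V → Option V)} (hβ : 0 ≤ β) (hS : OffInvariant T S) (hv : v ∈ T)
    (hCadj : ∀ c ∈ C, G.Adj v c) (hCT : ∀ c ∈ C, c ∈ T)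
    (hC : ∀ c ∈ C, fMeasure G.Adj w q {f | f c ≠ some v ∧ f v = none ∧ f ∈ S} ≤
      β * fMeasure G.Adj w q {f | f c = none ∧ f v = none ∧ f ∈ S}) :
    fMeasure G.Adj w q {f | (∃ c ∈ C, f v = some c) ∧ f ∈ S} ≤
      C.card * (β * fMeasure G.Adj w q {f | f v = none ∧ f ∈ S}) := by
  rw [fMeasure_exists_eq_sum, ← nsmul_eq_mul]
  refine Finset.sum_le_card_nsmul _ _ _ fun c hc => ?_
  rw [fMeasure_edge_of_offInvariant hG hq (hCadj c hc) hS hv,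
    fMeasure_root_split hG hq hsymm (hCadj c hc) hS (hCT c hc)]
  have h1 := mul_le_mul_of_nonneg_left (hC c hc) (div_nonneg (hw v c (hCadj c hc)) hq.le)
  have h2 := mul_nonneg hβ
    (fMeasure_nonneg (E := G.Adj) hw hq {f | f c ≠ some v ∧ f v = none ∧ f ∈ S})
  linarith

end Acyclic

section RootedTree

variable {G : SimpleGraph V}

/-- The children of `v` in the graph `G` with ancestor `a`. -/
noncomputable def children (G : SimpleGraph V) (a v : V) : Finset V :=
  Finset.univ.filter fun u : V => G.Adj v u ∧ G.dist a u = G.dist a v + 1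

/-- The descendants of `v` in the graph `G` with ancestor `a`. -/
def descendants (G : SimpleGraph V) (a v : V) : Set V :=
  {z | G.dist a z = G.dist a v + G.dist v z}

omit [DecidableEq V] in
theorem mem_children {a v u : V} :
    u ∈ children G a v ↔ G.Adj v u ∧ G.dist a u = G.dist a v + 1 := by
  simp [children]

omit [Fintype V] [DecidableEq V] in
theorem mem_descendants_self (a v : V) : v ∈ descendants G a v := by
  simp [descendants]

omit [Fintype V] [DecidableEq V] in
theorem notMem_descendants_of_dist_lt {a v z : V} (h : G.dist a z < G.dist a v) :
    z ∉ descendants G a v := by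
  simp only [descendants, Set.mem_ofPred_eq]; omega

omit [DecidableEq V] in
theorem descendants_subset_of_mem_children (hG : G.Connected) {a v c : V}
    (hc : c ∈ children G a v) : descendants G a c ⊆ descendants G a v := by
  intro z hz
  rw [mem_children] at hc
  simp only [descendants, Set.mem_ofPred_eq] at hz ⊢
  have h1 := hG.dist_triangle (u := a) (v := v) (w := z)
  have h2 := hG.dist_triangle (u := v) (v := c) (w := z)
  have h3 := SimpleGraph.dist_eq_one_iff_adj.2 hc.1
  omega

omit [DecidableEq V] in
theorem mem_descendants_of_mem_children (hG : G.Connected) {a v c : V}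
    (hc : c ∈ children G a v) : c ∈ descendants G a v :=
  descendants_subset_of_mem_children hG hc (mem_descendants_self a c)

omit [Fintype V] [DecidableEq V] in
theorem notMem_descendants_of_dist_eq (hG : G.Connected) {a v z : V} (hne : z ≠ v)
    (h : G.dist a z = G.dist a v) : z ∉ descendants G a v := by
  simp only [descendants, Set.mem_ofPred_eq]
  have := hG.pos_dist_of_ne hne.symm
  omega

omit [Fintype V] [DecidableEq V] in
theorem SimpleGraph.IsTree.eq_of_adj_of_dist (hG : G.IsTree) {a v p p' : V} (hp : G.Adj p v)
    (hp' : G.Adj p' v) (h : G.dist a v = G.dist a p + 1) (h' : G.dist a v = G.dist a p' + 1) :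
    p = p' := by
  obtain ⟨P, hP⟩ := hG.connected.exists_walk_length_eq_dist a p
  obtain ⟨P', hP'⟩ := hG.connected.exists_walk_length_eq_dist a p'
  have h1 : (P.concat hp).IsPath :=
    SimpleGraph.Walk.isPath_of_length_eq_dist _ (by rw [SimpleGraph.Walk.length_concat]; omega)
  have h2 : (P'.concat hp').IsPath :=
    SimpleGraph.Walk.isPath_of_length_eq_dist _ (by rw [SimpleGraph.Walk.length_concat]; omega)
  have := congrArg SimpleGraph.Walk.penultimate ((hG.existsUnique_path a v).unique h1 h2)
  simpa using this

omit [DecidableEq V] in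
theorem SimpleGraph.IsTree.mem_children_of_adj (hG : G.IsTree) {a v p u : V} (hp : G.Adj p v)
    (h : G.dist a v = G.dist a p + 1) (hu : G.Adj v u) (hne : u ≠ p) : u ∈ children G a v := by
  rw [mem_children]
  refine ⟨hu, ?_⟩
  rcases hG.dist_eq_dist_add_one_of_adj a hu with h' | h'
  · exact absurd (hG.eq_of_adj_of_dist hu.symm hp h' h) hne
  · exact h'

omit [Fintype V] [DecidableEq V] in
theorem offInvariant_and_root {T T' : Set V} {S : Set (V → Option V)} (hS : OffInvariant T S)
    (hT : T' ⊆ T) {v : V} (hv : v ∉ T') : OffInvariant T' {f | f v = none ∧ f ∈ S} :=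
  fun f g hfg hf => ⟨hfg v hv ▸ hf.1, hS f g (fun u hu => hfg u fun h => hu (hT h)) hf.2⟩

omit [Fintype V] [DecidableEq V] in
theorem offInvariant_ne_some {T : Set V} {v : V} (hv : v ∉ T) (c : V) :
    OffInvariant T {f : V → Option V | f v ≠ some c} :=
  fun _ _ hfg hf h => hf ((hfg v hv).trans h)

variable {w : V → V → ℝ} {q : ℝ}

/-- Recursive bound on `τ` times the probability that the top vertex of a subtree of depth `j`
is a root of the forest restricted to this subtree. -/
noncomputable def rootBound (d : ℕ) (τ : ℝ) : ℕ → ℝ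
  | 0 => τ
  | j + 1 => (1 + rootBound d τ j) / d

theorem rootBound_nonneg (d : ℕ) {τ : ℝ} (hτ : 0 ≤ τ) (j : ℕ) : 0 ≤ rootBound d τ j := by
  induction j with
  | zero => exact hτ
  | succ j ih => exact div_nonneg (by linarith) d.cast_nonneg

theorem rootBound_le {d : ℕ} (hd : 1 ≤ d) (τ : ℝ) (j : ℕ) :
    rootBound d τ j ≤ j / d + τ / (d : ℝ) ^ j := by
  have hd' : (1 : ℝ) ≤ d := by exact_mod_cast hd
  induction j with
  | zero => simp [rootBound]
  | succ j ih =>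
    have h1 : (j : ℝ) / d ≤ j := div_le_self j.cast_nonneg hd'
    calc rootBound d τ (j + 1) ≤ (1 + (j + τ / (d : ℝ) ^ j)) / d := by
          rw [rootBound]; gcongr; linarith
      _ = ((j + 1 : ℕ) : ℝ) / d + τ / (d : ℝ) ^ (j + 1) := by
          push_cast; field_simp; ring

theorem root_le_rootBound_mul (hG : G.IsTree) (hq : 0 < q) (hsymm : ∀ u v, w u v = w v u)
    (hw : ∀ u v, G.Adj u v → 0 ≤ w u v) {a : V} {d h : ℕ} (hd : 1 ≤ d) {τ : ℝ} (hτ0 : 0 ≤ τ)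
    (hreg : ∀ v, (children G a v).card = 0 ∨ (children G a v).card = d)
    (hτ : ∀ u u', u' ∈ children G a u → h ≤ G.dist a u → τ ≤ w u u' / q) (j : ℕ) (v p : V)
    (hp : G.dist a v = G.dist a p + 1) (hv : h ≤ G.dist a v)
    (hleaf : ∀ z, (children G a z).card = 0 → G.dist a v + j ≤ G.dist a z)
    {S : Set (V → Option V)} (hS : OffInvariant (descendants G a v) S) :
    τ * fMeasure G.Adj w q {f | f v = none ∧ f ∈ S} ≤
      rootBound d τ j * fMeasure G.Adj w q {f | f v ≠ some p ∧ f ∈ S} := by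
  induction j generalizing v p S with
  | zero =>
    refine mul_le_mul_of_nonneg_left (fMeasure_mono hw hq fun f _ hf => ⟨?_, hf.2⟩) hτ0
    simp [hf.1]
  | succ j ih =>
    have hcard : (children G a v).card = d := by
      refine (hreg v).resolve_left fun h0 => ?_
      have := hleaf v h0
      omega
    have hstep := card_mul_root_le (α := rootBound d τ j) (C := children G a v) hG.isAcyclic hq
      hsymm hw hS (mem_descendants_self a v) (fun c hc => (mem_children.1 hc).1)
      (fun c hc => mem_descendants_of_mem_children hG.connected hc) (fun c hc => hτ v c hc hv)
      (fun c hc => by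
        have hc' := mem_children.1 hc
        refine ih c v hc'.2 (by omega) (fun z hz => ?_) (offInvariant_and_root hS
          (descendants_subset_of_mem_children hG.connected hc)
          (notMem_descendants_of_dist_lt (by omega)))
        have h1 := hleaf z hz
        omega)
    have hmono : fMeasure G.Adj w q {f | (∃ c ∈ children G a v, f v = some c) ∧ f ∈ S} ≤
        fMeasure G.Adj w q {f | f v ≠ some p ∧ f ∈ S} := by
      refine fMeasure_mono hw hq fun f _ hf => ⟨fun hvp => ?_, hf.2⟩
      obtain ⟨⟨c, hc, hvc⟩, -⟩ := hf
      obtain rfl := Option.some_injective _ (hvc.symm.trans hvp)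
      have := (mem_children.1 hc).2
      omega
    have hd' : (0 : ℝ) < d := by exact_mod_cast hd
    rw [hcard] at hstep
    rw [rootBound, div_mul_eq_mul_div, le_div_iff₀' hd']
    exact hstep.trans (mul_le_mul_of_nonneg_left hmono
      (by linarith [rootBound_nonneg d hτ0 j]))

theorem le_geom_sum_mul_root (hG : G.IsTree) (hq : 0 < q) (hsymm : ∀ u v, w u v = w v u)
    (hw : ∀ u v, G.Adj u v → 0 ≤ w u v) {a : V} {d h : ℕ}
    (hcard : ∀ v, (children G a v).card ≤ d) (hh : ∀ v, G.dist a v ≤ h) (j : ℕ) (v p : V)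
    (hpv : G.Adj p v) (hp : G.dist a v = G.dist a p + 1) (hv : h ≤ G.dist a v + j)
    {S : Set (V → Option V)} (hS : OffInvariant (descendants G a v) S) :
    fMeasure G.Adj w q {f | f v ≠ some p ∧ f ∈ S} ≤
      (∑ i ∈ range (j + 1), (d : ℝ) ^ i) * fMeasure G.Adj w q {f | f v = none ∧ f ∈ S} := by
  have hcover : ∀ f : V → Option V, IsRForest G.Adj f → f v ≠ some p → f v ≠ none →
      ∃ c ∈ children G a v, f v = some c := by
    intro f hf hfp hfn
    obtain ⟨c, hc⟩ := Option.ne_none_iff_exists'.1 hfn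
    refine ⟨c, hG.mem_children_of_adj hpv hp (hf.2 v c hc) ?_, hc⟩
    rintro rfl
    exact hfp hc
  induction j generalizing v p S with
  | zero =>
    have hempty : ∀ c, c ∉ children G a v := by
      intro c hc
      have := (mem_children.1 hc).2
      have := hh c
      omega
    simp only [zero_add, Finset.range_one, Finset.sum_singleton, pow_zero, one_mul]
    refine fMeasure_mono hw hq fun f hf hfS => ⟨?_, hfS.2⟩
    by_contra hfn
    obtain ⟨c, hc, -⟩ := hcover f hf hfS.1 hfn
    exact hempty c hc
  | succ j ih =>
    have hβ : 0 ≤ ∑ i ∈ range (j + 1), (d : ℝ) ^ i :=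
      Finset.sum_nonneg fun _ _ => by positivity
    have hstep := fMeasure_le_mul_root (C := children G a v) hG.isAcyclic hq hsymm hw hβ hS
      (mem_descendants_self a v) (fun c hc => (mem_children.1 hc).1)
      (fun c hc => mem_descendants_of_mem_children hG.connected hc)
      (fun c hc => by
        have hc' := mem_children.1 hc
        refine ih c v hc'.1 hc'.2 (by omega) (offInvariant_and_root hS
          (descendants_subset_of_mem_children hG.connected hc)
          (notMem_descendants_of_dist_lt (by omega))) ?_
        intro f hf hfp hfn
        obtain ⟨c', hcc'⟩ := Option.ne_none_iff_exists'.1 hfn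
        refine ⟨c', hG.mem_children_of_adj hc'.1 hc'.2 (hf.2 c c' hcc') ?_, hcc'⟩
        rintro rfl
        exact hfp hcc')
    rw [fMeasure_split _ (fun f => f v = none), geom_sum_succ, add_mul, one_mul, add_comm]
    refine add_le_add ?_ (fMeasure_mono hw hq fun f _ hf => ⟨hf.1, hf.2.2⟩)
    refine le_trans (fMeasure_mono hw hq fun f hf hfS => ?_) (hstep.trans ?_)
    · exact ⟨hcover f hf hfS.2.1 hfS.1, hfS.2.2⟩
    rw [← mul_assoc]
    have := fMeasure_nonneg (E := G.Adj) hw hq {f | f v = none ∧ f ∈ S}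
    gcongr
    exact hcard v

theorem fMeasure_not_sameTree (hG : G.IsAcyclic) {x y : V} (hxy : G.Adj x y) :
    fMeasure G.Adj w q {f | ¬ SameTree f x y} =
      fMeasure G.Adj w q {f | f y ≠ some x ∧ f x ≠ some y} := by
  refine fMeasure_congr fun f hf => ?_
  simp only [Set.mem_ofPred_eq]
  constructor
  · intro h
    exact ⟨fun hyx => h ⟨x, Relation.ReflTransGen.refl, Relation.ReflTransGen.single hyx⟩,
      fun hxy => h ⟨y, Relation.ReflTransGen.single hxy, Relation.ReflTransGen.refl⟩⟩
  · intro h hs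
    exact (hG.eq_some_of_sameTree hf.2 hxy hs).elim h.2 h.1

theorem fMeasure_adj (hG : G.IsAcyclic) (hq : 0 < q) {x y : V} (hxy : G.Adj x y) :
    fMeasure G.Adj w q {f | f x = some y} =
      w x y / q * fMeasure G.Adj w q {f | f x = none ∧ f y ≠ some x} := by
  have h := fMeasure_edge_of_offInvariant (w := w) (T := Set.univ) (S := Set.univ) hG hq hxy
    (fun _ _ _ h => h) (Set.mem_univ x)
  simp only [Set.mem_univ, and_true] at h
  rw [h]
  simp only [and_comm]

theorem Zf_eq_add (hG : G.IsAcyclic) (hq : 0 < q) (hsymm : ∀ u v, w u v = w v u)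
    {x y : V} (hxy : G.Adj x y) :
    Zf G.Adj w q = w x y / q * fMeasure G.Adj w q {f | f y = none ∧ f x ≠ some y} +
      w x y / q * fMeasure G.Adj w q {f | f x = none ∧ f y ≠ some x} +
      fMeasure G.Adj w q {f | f y ≠ some x ∧ f x ≠ some y} := by
  have h1 := fMeasure_adj (w := w) hG hq hxy.symm
  have h2 := fMeasure_adj (w := w) hG hq hxy
  rw [hsymm y x] at h1
  rw [← h1, ← h2, Zf, fMeasure_split _ (fun f => f y = some x), add_assoc]
  congr 1
  · simp
  rw [fMeasure_split _ (fun f => f x = some y)]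
  congr 1
  · refine fMeasure_congr fun f hf => ?_
    simp only [Set.mem_ofPred_eq, Set.mem_univ, and_true]
    refine ⟨fun h => h.1, fun h => ⟨h, fun h' => ?_⟩⟩
    exact hf.1.not_transGen_self x (Relation.TransGen.head h (Relation.TransGen.single h'))
  · refine fMeasure_congr fun f hf => ?_
    simp only [Set.mem_ofPred_eq, Set.mem_univ, and_true]
    tauto

theorem Zf_pos (hw : ∀ u v, G.Adj u v → 0 ≤ w u v) (hq : 0 < q) : 0 < Zf G.Adj w q :=
  fMeasure_pos hw hq (Set.mem_univ _)

theorem Ucorr_nonneg (hw : ∀ u v, G.Adj u v → 0 ≤ w u v) (hq : 0 < q) (x y : V) :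
    0 ≤ Ucorr G.Adj w q x y :=
  div_nonneg (fMeasure_nonneg hw hq _) (Zf_pos hw hq).le

theorem Ucorr_le_one (hw : ∀ u v, G.Adj u v → 0 ≤ w u v) (hq : 0 < q) (x y : V) :
    Ucorr G.Adj w q x y ≤ 1 :=
  div_le_one_of_le₀ (fMeasure_mono hw hq fun _ _ _ => Set.mem_univ _) (Zf_pos hw hq).le

theorem Ucorr_mul_le_geom_sum (hG : G.IsTree) (hq : 0 < q) (hsymm : ∀ u v, w u v = w v u)
    (hw : ∀ u v, G.Adj u v → 0 ≤ w u v) {a : V} {d h k : ℕ}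
    (hcard : ∀ v, (children G a v).card ≤ d) (hh : ∀ v, G.dist a v ≤ h) {x y : V}
    (hy : y ∈ children G a x) (hk : h ≤ G.dist a y + k) :
    Ucorr G.Adj w q x y * (w x y / q) ≤ ∑ i ∈ range (k + 1), (d : ℝ) ^ i := by
  obtain ⟨hxy, hdist⟩ := mem_children.1 hy
  have hx : x ∉ descendants G a y := notMem_descendants_of_dist_lt (by omega)
  have hmain := le_geom_sum_mul_root hG hq hsymm hw hcard hh k y x hxy hdist hk
    (offInvariant_ne_some hx y)
  simp only [Set.mem_ofPred_eq] at hmain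
  have hZ := Zf_eq_add (w := w) hG.isAcyclic hq hsymm hxy
  have hτ : 0 ≤ w x y / q := div_nonneg (hw x y hxy) hq.le
  have h1 := mul_nonneg hτ
    (fMeasure_nonneg (E := G.Adj) hw hq {f | f x = none ∧ f y ≠ some x})
  have h2 := fMeasure_nonneg (E := G.Adj) hw hq {f | f y ≠ some x ∧ f x ≠ some y}
  rw [Ucorr, fProb, fMeasure_not_sameTree hG.isAcyclic hxy, div_mul_eq_mul_div,
    div_le_iff₀ (Zf_pos hw hq)]
  have hβ : 0 ≤ ∑ i ∈ range (k + 1), (d : ℝ) ^ i := Finset.sum_nonneg fun _ _ => by positivity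
  calc _ ≤ (∑ i ∈ range (k + 1), (d : ℝ) ^ i) *
        (w x y / q * fMeasure G.Adj w q {f | f y = none ∧ f x ≠ some y}) := by
        have := mul_le_mul_of_nonneg_right hmain hτ
        linarith
    _ ≤ _ := mul_le_mul_of_nonneg_left (by linarith) hβ

theorem one_sub_Ucorr_eq (hG : G.IsAcyclic) (hq : 0 < q) (hsymm : ∀ u v, w u v = w v u)
    (hw : ∀ u v, G.Adj u v → 0 ≤ w u v) {x y : V} (hxy : G.Adj x y) :
    1 - Ucorr G.Adj w q x y =
      (w x y / q * fMeasure G.Adj w q {f | f y = none ∧ f x ≠ some y} +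
      w x y / q * fMeasure G.Adj w q {f | f x = none ∧ f y ≠ some x}) / Zf G.Adj w q := by
  have hZ := (Zf_pos (G := G) hw hq).ne'
  rw [Ucorr, fProb, fMeasure_not_sameTree hG hxy, eq_div_iff hZ, sub_mul, div_mul_cancel₀ _ hZ,
    Zf_eq_add hG hq hsymm hxy]
  ring

theorem one_sub_Ucorr_le_two_mul (hG : G.IsAcyclic) (hq : 0 < q) (hsymm : ∀ u v, w u v = w v u)
    (hw : ∀ u v, G.Adj u v → 0 ≤ w u v) {x y : V} (hxy : G.Adj x y) :
    1 - Ucorr G.Adj w q x y ≤ 2 * (w x y / q) := by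
  have hτ : 0 ≤ w x y / q := div_nonneg (hw x y hxy) hq.le
  have hle : ∀ S : Set (V → Option V), w x y / q * fMeasure G.Adj w q S ≤
      w x y / q * Zf G.Adj w q := fun S =>
    mul_le_mul_of_nonneg_left (fMeasure_mono hw hq fun _ _ _ => Set.mem_univ _) hτ
  rw [one_sub_Ucorr_eq hG hq hsymm hw hxy, div_le_iff₀ (Zf_pos hw hq)]
  have h1 := hle {f | f y = none ∧ f x ≠ some y}
  have h2 := hle {f | f x = none ∧ f y ≠ some x}
  linarith

theorem one_sub_Ucorr_le_rootBound (hG : G.IsTree) (hq : 0 < q) (hsymm : ∀ u v, w u v = w v u)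
    (hw : ∀ u v, G.Adj u v → 0 ≤ w u v) {a : V} {d k : ℕ}
    (hreg : ∀ v, (children G a v).card = 0 ∨ (children G a v).card = d) {x y : V}
    (hy : y ∈ children G a x)
    (hτ : ∀ u u', u' ∈ children G a u → G.dist a x ≤ G.dist a u → w x y ≤ w u u')
    (hleaf : ∀ z, (children G a z).card = 0 → G.dist a y + k ≤ G.dist a z) :
    ((d : ℝ) - 1) * (1 - Ucorr G.Adj w q x y) ≤
      (d - 1) * rootBound d (w x y / q) k + (1 + rootBound d (w x y / q) k) := by
  obtain ⟨hxy, hdist⟩ := mem_children.1 hy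
  have hτ0 : 0 ≤ w x y / q := div_nonneg (hw x y hxy) hq.le
  have hcard : (children G a x).card = d :=
    (hreg x).resolve_left (Finset.card_ne_zero_of_mem hy)
  have hd : 1 ≤ d := hcard ▸ Finset.card_pos.2 ⟨y, hy⟩
  have hd' : (1 : ℝ) ≤ d := by exact_mod_cast hd
  set α := rootBound d (w x y / q) k with hα
  have hα0 : 0 ≤ α := rootBound_nonneg d hτ0 k
  have hτ' : ∀ u u', u' ∈ children G a u → G.dist a x ≤ G.dist a u → w x y / q ≤ w u u' / q :=
    fun u u' hu hd => div_le_div_of_nonneg_right (hτ u u' hu hd) hq.le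
  have hmainy := root_le_rootBound_mul hG hq hsymm hw hd hτ0 hreg hτ' k y x hdist (by omega)
    hleaf (offInvariant_ne_some (notMem_descendants_of_dist_lt (by omega) :
      x ∉ descendants G a y) y)
  have hS : OffInvariant {z | z ≠ y} {f : V → Option V | f y ≠ some x} :=
    offInvariant_ne_some (by simp) x
  have hmainx := card_mul_root_le (α := α) (C := (children G a x).erase y) hG.isAcyclic hq
    hsymm hw hS hxy.ne (fun c hc => (mem_children.1 (Finset.mem_of_mem_erase hc)).1)
    (fun c hc => Finset.ne_of_mem_erase hc)
    (fun c hc => hτ' x c (Finset.mem_of_mem_erase hc) le_rfl)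
    (fun c hc => by
      obtain ⟨hcy, hc⟩ := Finset.mem_erase.1 hc
      have hc' := mem_children.1 hc
      refine root_le_rootBound_mul hG hq hsymm hw hd hτ0 hreg hτ' k c x hc'.2 (by omega)
        (fun z hz => by have := hleaf z hz; omega) ?_
      have hyc : y ∉ descendants G a c :=
        notMem_descendants_of_dist_eq hG.connected hcy.symm (by omega)
      exact offInvariant_and_root (T := {y}ᶜ) hS (fun z hz hzy => hyc (hzy ▸ hz))
        (notMem_descendants_of_dist_lt (by omega)))
  rw [Finset.card_erase_of_mem hy, hcard, Nat.cast_sub hd, Nat.cast_one] at hmainx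
  simp only [Set.mem_ofPred_eq] at hmainx hmainy
  have hNZ : fMeasure G.Adj w q {f | f y ≠ some x ∧ f x ≠ some y} ≤ Zf G.Adj w q :=
    fMeasure_mono hw hq fun _ _ _ => Set.mem_univ _
  have hCZ : fMeasure G.Adj w q
      {f | (∃ c ∈ (children G a x).erase y, f x = some c) ∧ f y ≠ some x} ≤ Zf G.Adj w q :=
    fMeasure_mono hw hq fun _ _ _ => Set.mem_univ _
  rw [one_sub_Ucorr_eq hG.isAcyclic hq hsymm hw hxy, ← mul_div_assoc,
    div_le_iff₀ (Zf_pos hw hq)]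
  have h1 := mul_le_mul_of_nonneg_left (hmainy.trans (mul_le_mul_of_nonneg_left hNZ hα0))
    (sub_nonneg.2 hd')
  have h2 := hmainx.trans (mul_le_mul_of_nonneg_left hCZ (by linarith))
  linarith

omit [DecidableEq V] in
theorem exists_descendant_card_children_eq_zero (hG : G.Connected) (a v : V) :
    ∃ z ∈ descendants G a v, (children G a z).card = 0 := by
  obtain ⟨z, hz, hmax⟩ := (descendants G a v).toFinite.exists_maximalFor (G.dist a) _
    ⟨v, mem_descendants_self a v⟩
  refine ⟨z, hz, Finset.card_eq_zero.2 (Finset.eq_empty_of_forall_notMem fun u hu => ?_)⟩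
  obtain ⟨hzu, hdist⟩ := mem_children.1 hu
  have h1 := hG.dist_triangle (u := a) (v := v) (w := u)
  have h2 := hG.dist_triangle (u := v) (v := z) (w := u)
  have h3 := SimpleGraph.dist_eq_one_iff_adj.2 hzu
  have hz' : G.dist a z = G.dist a v + G.dist v z := hz
  have := hmax (j := u) (show G.dist a u = G.dist a v + G.dist v u by omega) (by omega)
  omega

end RootedTree

end RootedForests

theorem tendsto_zero_of_forall_nat_le {α : Type*} {l : Filter α} {u ρ : α → ℝ} {C : ℝ}
    {B : ℕ → ℝ} (hu : ∀ n, 0 ≤ u n) (hρ : Tendsto ρ l (nhds 0))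
    (h : ∀ n (D : ℕ), 2 ≤ D → u n ≤ C / D + B D * ρ n) : Tendsto u l (nhds 0) := by
  rw [Metric.tendsto_nhds]
  intro ε hε
  have hC : Tendsto (fun D : ℕ => C / (D : ℝ)) atTop (nhds 0) :=
    tendsto_const_div_atTop_nhds_zero_nat C
  obtain ⟨D, hD, hD2⟩ := ((hC.eventually (gt_mem_nhds (half_pos hε))).and
    (eventually_ge_atTop 2)).exists
  have hB : Tendsto (fun n => B D * ρ n) l (nhds 0) := by simpa using hρ.const_mul (B D)
  filter_upwards [hB.eventually (gt_mem_nhds (half_pos hε))] with n hn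
  rw [Real.dist_eq, sub_zero, abs_of_nonneg (hu n)]
  linarith [h n D hD2]

theorem le_of_le_rootBound {d k D : ℕ} (hd : 1 ≤ d) (hD : 2 ≤ D) {τ u : ℝ} (hτ : 0 ≤ τ)
    (h1 : u ≤ 2 * τ)
    (h2 : ((d : ℝ) - 1) * u ≤ (d - 1) * rootBound d τ k + (1 + rootBound d τ k)) :
    u ≤ (3 * k + 2) / D + (3 + 2 * (D : ℝ) ^ k) * (τ / (d : ℝ) ^ k) := by
  have hd' : (1 : ℝ) ≤ d := by exact_mod_cast hd
  have hD' : (2 : ℝ) ≤ D := by exact_mod_cast hD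
  have hdk : (0 : ℝ) < (d : ℝ) ^ k := by positivity
  have hρ : 0 ≤ τ / (d : ℝ) ^ k := by positivity
  set ρ := τ / (d : ℝ) ^ k with hρdef
  rcases lt_or_ge d D with hdD | hdD
  · have hτρ : τ = ρ * (d : ℝ) ^ k := by rw [hρdef]; field_simp
    have hpow : (d : ℝ) ^ k ≤ (D : ℝ) ^ k := by gcongr
    have := mul_le_mul_of_nonneg_left hpow hρ
    have : 0 ≤ (3 * (k : ℝ) + 2) / D := by positivity
    linarith
  · have hdD' : (D : ℝ) ≤ d := by exact_mod_cast hdD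
    have hα := rootBound_le hd τ k
    rw [← hρdef] at hα
    set α := rootBound d τ k
    have hkd : (k : ℝ) / d ≤ k := div_le_self k.cast_nonneg hd'
    have hu : u ≤ α + (1 + α) / (d - 1) := by
      have : (0 : ℝ) < d - 1 := by linarith
      rw [← sub_le_iff_le_add', le_div_iff₀ this]
      linarith
    have hα0 : 0 ≤ α := rootBound_nonneg d hτ k
    have h3 : (1 + α) / (d - 1) ≤ (1 + α) * (2 / d) := by
      rw [← mul_div_assoc, div_le_div_iff₀ (by linarith) (by linarith)]
      nlinarith
    have h4 : (2 : ℝ) / d ≤ 1 := by rw [div_le_one (by linarith)]; linarith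
    have h5 : (1 + α) * (2 / d) ≤ (1 + k) * (2 / d) + ρ := by
      have : (1 + α) * (2 / d) ≤ (1 + (k + ρ)) * (2 / d) := by gcongr; linarith
      nlinarith
    have h6 : (k : ℝ) / d + (1 + k) * (2 / d) ≤ (3 * k + 2) / D := by
      have : (k : ℝ) / d + (1 + k) * (2 / d) = (3 * k + 2) / d := by ring
      rw [this]; gcongr
    have h7 : 0 ≤ (D : ℝ) ^ k * ρ := by positivity
    linarith

theorem geom_sum_le_mul_pow {d : ℕ} (hd : 1 ≤ d) (k : ℕ) :
    ∑ i ∈ range (k + 1), (d : ℝ) ^ i ≤ (k + 1) * (d : ℝ) ^ k := by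
  have hd' : (1 : ℝ) ≤ d := by exact_mod_cast hd
  have := Finset.sum_le_card_nsmul (range (k + 1)) (fun i => (d : ℝ) ^ i) ((d : ℝ) ^ k)
    fun i hi => pow_le_pow_right₀ hd' (by simp at hi; omega)
  simpa using this

open Filter Asymptotics in
/-- **Asymptotic detection of layers in a regular hierarchical weighted tree.**
For each `n`, `G_n` is an undirected `d_n`-regular tree with ancestor `a_n` and
hierarchical (symmetric, nonnegative) edge weights `w_n`: edges in the same generation
have equal weight and weights are non-decreasing in the generation. `x_n` is the parent of
`y_n`, and the minimal distance between `y_n` and a leaf of `G_n` (a vertex without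
children) is the constant `k`. Then `U_{q_n}(x_n,y_n) → 0` if
`q_n = o(d_n^{-k} w_n(e_n))` and `U_{q_n}(x_n,y_n) → 1` if `q_n = ω(d_n^{-k} w_n(e_n))`,
where `e_n` is the edge between `x_n` and `y_n`. -/
theorem regular_hierarchical_tree_asymptotics
    (V : ℕ → Type) [∀ n, Fintype (V n)] [∀ n, DecidableEq (V n)]
    (G : ∀ n, SimpleGraph (V n)) (htree : ∀ n, (G n).IsTree)
    (a : ∀ n, V n) (w : ∀ n, V n → V n → ℝ)
    (hsymm : ∀ n (u v : V n), w n u v = w n v u)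
    (hnonneg : ∀ n (u v : V n), (G n).Adj u v → 0 ≤ w n u v)
    (hsame : ∀ n (u v u' v' : V n), (G n).Adj u v → (G n).Adj u' v' →
      (G n).dist (a n) v = (G n).dist (a n) u + 1 →
      (G n).dist (a n) v' = (G n).dist (a n) u' + 1 →
      (G n).dist (a n) v = (G n).dist (a n) v' → w n u v = w n u' v')
    (hmono : ∀ n (u v u' v' : V n), (G n).Adj u v → (G n).Adj u' v' →
      (G n).dist (a n) v = (G n).dist (a n) u + 1 →
      (G n).dist (a n) v' = (G n).dist (a n) u' + 1 →
      (G n).dist (a n) v ≤ (G n).dist (a n) v' → w n u v ≤ w n u' v')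
    (d : ℕ → ℕ)
    (hreg : ∀ n (v : V n),
      (G n).dist (a n) v < Finset.univ.sup (fun u : V n => (G n).dist (a n) u) →
      (Finset.univ.filter fun u : V n =>
        (G n).Adj v u ∧ (G n).dist (a n) u = (G n).dist (a n) v + 1).card = d n)
    (x y : ∀ n, V n)
    (hadj : ∀ n, (G n).Adj (x n) (y n))
    (hparent : ∀ n, (G n).dist (a n) (y n) = (G n).dist (a n) (x n) + 1)
    (k : ℕ)
    (hleafdist : ∀ n, IsLeast {m : ℕ | ∃ v : V n,
      (Finset.univ.filter fun u : V n =>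
        (G n).Adj v u ∧ (G n).dist (a n) u = (G n).dist (a n) v + 1).card = 0 ∧
      (G n).dist (y n) v = m} k)
    (q : ℕ → ℝ) (hq : ∀ n, 0 < q n) :
    ((q =o[atTop] fun n => w n (x n) (y n) / (d n : ℝ) ^ k) →
      Tendsto (fun n => Ucorr (G n).Adj (w n) (q n) (x n) (y n)) atTop (nhds 0)) ∧
    (((fun n => w n (x n) (y n) / (d n : ℝ) ^ k) =o[atTop] q) →
      Tendsto (fun n => Ucorr (G n).Adj (w n) (q n) (x n) (y n)) atTop (nhds 1)) := by
  have hy : ∀ n, y n ∈ children (G n) (a n) (x n) := fun n =>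
    mem_children.2 ⟨hadj n, hparent n⟩
  have hH : ∀ n (v : V n), (G n).dist (a n) v ≤ Finset.univ.sup (fun u => (G n).dist (a n) u) :=
    fun n v => Finset.le_sup (f := fun u => (G n).dist (a n) u) (Finset.mem_univ v)
  have hreg' : ∀ n (v : V n),
      (G n).dist (a n) v < Finset.univ.sup (fun u : V n => (G n).dist (a n) u) →
      (children (G n) (a n) v).card = d n := hreg
  have hleaf : ∀ n, ∃ z, (children (G n) (a n) z).card = 0 ∧ (G n).dist (y n) z = k :=
    fun n => (hleafdist n).1
  have hleast : ∀ n z, (children (G n) (a n) z).card = 0 → k ≤ (G n).dist (y n) z :=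
    fun n z hz => (hleafdist n).2 ⟨z, hz, rfl⟩
  generalize hHdef : (fun n => Finset.univ.sup (fun u : V n => (G n).dist (a n) u)) = H at *
  have hHn : ∀ n, Finset.univ.sup (fun u : V n => (G n).dist (a n) u) = H n :=
    fun n => congrFun hHdef n
  simp only [hHn] at hH hreg'
  have hcard : ∀ n v, (children (G n) (a n) v).card = 0 ∨
      (children (G n) (a n) v).card = d n := by
    intro n v
    by_contra! hne
    refine hne.2 (hreg' n v (not_le.1 fun hle => ?_))
    obtain ⟨c, hc⟩ := Finset.card_ne_zero.1 hne.1
    have := (mem_children.1 hc).2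
    have := hH n c
    omega
  have hd : ∀ n, 1 ≤ d n := fun n =>
    (hcard n (x n)).resolve_left (Finset.card_ne_zero_of_mem (hy n)) ▸
      Finset.card_pos.2 ⟨y n, hy n⟩
  have hleafH : ∀ n z, (children (G n) (a n) z).card = 0 → H n ≤ (G n).dist (a n) z := by
    intro n z hz
    by_contra! hlt
    have := hreg' n z hlt
    have := hd n
    omega
  have hHy : ∀ n, (G n).dist (a n) (y n) + k ≤ H n := by
    intro n
    obtain ⟨z, hz, hz0⟩ :=
      exists_descendant_card_children_eq_zero (htree n).connected (a n) (y n)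
    have h1 := hleast n z hz0
    have h2 := hH n z
    have h3 : (G n).dist (a n) z = (G n).dist (a n) (y n) + (G n).dist (y n) z := hz
    omega
  have hHy' : ∀ n, H n ≤ (G n).dist (a n) (y n) + k := by
    intro n
    obtain ⟨z, hz0, hz⟩ := hleaf n
    have h1 := (htree n).connected.dist_triangle (u := a n) (v := y n) (w := z)
    have h2 := hleafH n z hz0
    omega
  have hcard' : ∀ n v, (children (G n) (a n) v).card ≤ d n := fun n v => by
    rcases hcard n v with h | h <;> omega
  have hτ : ∀ n, 0 ≤ w n (x n) (y n) / q n := fun n =>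
    div_nonneg (hnonneg n _ _ (hadj n)) (hq n).le
  have hU0 := fun n => Ucorr_nonneg (hnonneg n) (hq n) (x n) (y n)
  have hU1 := fun n => Ucorr_le_one (hnonneg n) (hq n) (x n) (y n)
  constructor
  · intro hlo
    have hlim : Tendsto (fun n => (k + 1) * (q n / (w n (x n) (y n) / (d n : ℝ) ^ k))) atTop
        (nhds 0) := by
      simpa using hlo.tendsto_div_nhds_zero.const_mul ((k : ℝ) + 1)
    refine squeeze_zero' (Eventually.of_forall hU0) ?_ hlim
    filter_upwards [hlo.bound one_pos] with n hn
    have hdk : (0 : ℝ) < (d n : ℝ) ^ k := by have := hd n; positivity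
    have hw0 : 0 < w n (x n) (y n) := by
      refine (hnonneg n _ _ (hadj n)).lt_of_ne fun h0 => ?_
      rw [← h0] at hn
      simp at hn
      exact (hq n).ne' hn
    have h1 := (Ucorr_mul_le_geom_sum (htree n) (hq n) (hsymm n) (hnonneg n) (hcard' n) (hH n)
      (hy n) (hHy' n)).trans (geom_sum_le_mul_pow (hd n) k)
    rw [← le_div_iff₀ (div_pos hw0 (hq n))] at h1
    refine h1.trans (le_of_eq ?_)
    have := hq n
    field_simp
  · intro hlo
    have hlim : Tendsto (fun n => w n (x n) (y n) / q n / (d n : ℝ) ^ k) atTop (nhds 0) := by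
      simpa only [div_right_comm] using hlo.tendsto_div_nhds_zero
    have hmain : Tendsto (fun n => 1 - Ucorr (G n).Adj (w n) (q n) (x n) (y n)) atTop
        (nhds 0) := by
      refine tendsto_zero_of_forall_nat_le (C := 3 * k + 2)
        (B := fun D => 3 + 2 * (D : ℝ) ^ k) (fun n => sub_nonneg.2 (hU1 n)) hlim
        fun n D hD => ?_
      refine le_of_le_rootBound (hd n) hD (hτ n) (one_sub_Ucorr_le_two_mul (htree n).isAcyclic
        (hq n) (hsymm n) (hnonneg n) (hadj n)) (one_sub_Ucorr_le_rootBound (htree n) (hq n)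
        (hsymm n) (hnonneg n) (hcard n) (hy n) (fun u u' hu hle => ?_) fun z hz => ?_)
      · obtain ⟨h1, h2⟩ := mem_children.1 hu
        exact hmono n _ _ _ _ (hadj n) h1 (hparent n) h2 (by have := hparent n; omega)
      · exact (hHy n).trans (hleafH n z hz)
    simpa using (tendsto_const_nhds (x := (1 : ℝ))).sub hmain
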